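/- Let q = 4 and k ≥ 1 an integer, and let g(x) = x + S_{2k}(x)^{q^{2k}} + S_{2k}(x)^{q^k+3}. If a ∈ F_{q^{3k}} satisfies a + a^{q^k} + a^{q^{2k}} ≠ 0 (nonvanishing relative trace to F_{q^k}), then there exists y ∈ F_{q^k} such that Tr(a·g(x+y)) − Tr(a·g(x)) = Tr(a·y) ≠ 0 for all x ∈ F_{q^{3k}}, where Tr = Tr_{q^{3k}/2} is the absolute trace to F_2; consequently Σ_{x ∈ F_{q^{3k}}} (−1)^{Tr(a·g(x))} = 0. -/

import Mathlib

/-- `S2k q k x = x + x^q + x^(q^2) + ⋯ + x^(q^(2k-1))`. -/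
def S2k (q k : ℕ) {F : Type*} [Field F] (x : F) : F :=
  ∑ i ∈ Finset.range (2 * k), x ^ q ^ i

/-- The absolute trace to `F_2` of a field with `2^m` elements:
`Tr(x) = x + x^2 + x^4 + ⋯ + x^{2^{m-1}}`. -/
def absTr (m : ℕ) {F : Type*} [Field F] (x : F) : F :=
  ∑ i ∈ Finset.range m, x ^ 2 ^ i

/-- `(-1)^a` for `a ∈ F_2 ⊆ F`: `1` if `a = 0`, `-1` otherwise. -/
def chi {F : Type*} [Field F] [DecidableEq F] (a : F) : ℤ :=
  if a = 0 then 1 else -1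

/-!
The map `S2k q k` is additive and, in characteristic two, kills `F_{q^k}`, since for `y ∈ F_{q^k}`
the summands `y ^ q ^ i` and `y ^ q ^ (i + k)` agree. So translating `x` by such a `y` changes
`a * (x + h (S2k q k x))` by `a * y` only, whatever `h` is. Transitivity of the trace gives
`Tr (a * y) = Tr_{F_{q^k}/F_2} (Tr_{F/F_{q^k}} a * y)`, which by nondegeneracy of the trace form is
nonzero for a suitable `y`. Translation by that `y` negates every term of the character sum.
-/

open Finset

theorem exists_trace_mul_algebraMap_ne_zero (K E : Type*) {L : Type*} [Field K] [Field E] [Field L]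
    [Algebra K E] [Algebra E L] [Algebra K L] [IsScalarTower K E L]
    [FiniteDimensional K E] [FiniteDimensional E L] [Algebra.IsSeparable K E]
    {a : L} (ha : Algebra.trace E L a ≠ 0) :
    ∃ y : E, Algebra.trace K L (a * algebraMap E L y) ≠ 0 := by
  have trace_eq (y : E) : Algebra.trace K L (a * algebraMap E L y) =
      Algebra.trace K E (Algebra.trace E L a * y) := by
    rw [← Algebra.trace_trace (S := E), mul_comm a, ← Algebra.smul_def, map_smul, smul_eq_mul,
      mul_comm y]
  by_contra! h
  exact ha ((traceForm_nondegenerate K E).1 _ fun y ↦ (trace_eq y).symm.trans (h y))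

theorem sum_eq_zero_of_map_add_right_eq_neg {G M : Type*} [AddGroup G] [Fintype G]
    [AddCommGroup M] [IsAddTorsionFree M] {f : G → M} (y : G) (hf : ∀ x, f (x + y) = -f x) :
    ∑ x, f x = 0 := by
  rw [← self_eq_neg, ← sum_neg_distrib]
  calc
    ∑ x, f x = ∑ x, f (x + y) := (Equiv.sum_comp (Equiv.addRight y) f).symm
    _ = ∑ x, -f x := sum_congr rfl fun x _ ↦ hf x

section FiniteField

variable {F : Type*} [Field F]

theorem finrank_zmod_eq_of_card [Finite F] {p m : ℕ} [Fact p.Prime] [Algebra (ZMod p) F]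
    (hF : Nat.card F = p ^ m) : Module.finrank (ZMod p) F = m :=
  Nat.pow_right_injective (Fact.out : p.Prime).two_le
    ((FiniteField.pow_finrank_eq_natCard p F).trans hF)

theorem exists_eq_prime_pow_of_card_eq_pow [Finite F] {p q n : ℕ} [Fact p.Prime]
    [Algebra (ZMod p) F] (hF : Nat.card F = q ^ n) : ∃ r, q = p ^ r := by
  have hn : n ≠ 0 := by
    rintro rfl
    exact Finite.one_lt_card.ne' (hF.trans (pow_zero q))
  have q_dvd : q ∣ p ^ Module.finrank (ZMod p) F := by
    rw [FiniteField.pow_finrank_eq_natCard, hF]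
    exact dvd_pow_self q hn
  obtain ⟨r, -, hr⟩ := (Nat.dvd_prime_pow Fact.out).1 q_dvd
  exact ⟨r, hr⟩

theorem exists_pow_eq_self_and_trace_mul_ne_zero [Finite F] {p q n : ℕ} [Fact p.Prime]
    [Algebra (ZMod p) F] (hF : Nat.card F = q ^ n) {a : F} (ha : ∑ i ∈ range n, a ^ q ^ i ≠ 0) :
    ∃ y : F, y ^ q = y ∧ Algebra.trace (ZMod p) F (a * y) ≠ 0 := by
  obtain ⟨r, rfl⟩ := exists_eq_prime_pow_of_card_eq_pow (p := p) hF
  have hr : r ≠ 0 := by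
    rintro rfl
    exact Finite.one_lt_card.ne' (by simpa using hF)
  let E := GaloisField p r
  have finrank_E : Module.finrank (ZMod p) E = r := GaloisField.finrank p hr
  have finrank_F : Module.finrank (ZMod p) F = r * n :=
    finrank_zmod_eq_of_card (hF.trans (pow_mul p r n).symm)
  obtain ⟨f⟩ : Nonempty (E →ₐ[ZMod p] F) :=
    FiniteField.nonempty_algHom_of_finrank_dvd ⟨n, by rw [finrank_E, finrank_F]⟩
  algebraize [f.toRingHom]
  have finrank_E_F : Module.finrank E F = n := by
    have := Module.finrank_mul_finrank (ZMod p) E F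
    rw [finrank_E, finrank_F] at this
    exact Nat.eq_of_mul_eq_mul_left (Nat.pos_of_ne_zero hr) this
  have card_E : Nat.card E = p ^ r := GaloisField.card p r hr
  have trace_ne_zero : Algebra.trace E F a ≠ 0 := by
    rw [← map_ne_zero (algebraMap E F), FiniteField.algebraMap_trace_eq_sum_pow, finrank_E_F,
      card_E]
    exact ha
  obtain ⟨y, hy⟩ := exists_trace_mul_algebraMap_ne_zero (ZMod p) E trace_ne_zero
  have pow_eq_self : y ^ p ^ r = y := by
    have := Fintype.ofFinite E
    rw [← card_E, Nat.card_eq_fintype_card, FiniteField.pow_card]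
  exact ⟨algebraMap E F y, by rw [← map_pow, pow_eq_self], hy⟩

theorem absTr_eq_algebraMap_trace [Finite F] [Algebra (ZMod 2) F] {m : ℕ} (hF : Nat.card F = 2 ^ m)
    (x : F) : absTr m x = algebraMap (ZMod 2) F (Algebra.trace (ZMod 2) F x) := by
  rw [FiniteField.algebraMap_trace_eq_sum_pow, finrank_zmod_eq_of_card hF, Nat.card_zmod, absTr]

theorem absTr_add [CharP F 2] (m : ℕ) (x y : F) : absTr m (x + y) = absTr m x + absTr m y := by
  simp only [absTr, add_pow_char_pow, sum_add_distrib]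

theorem chi_absTr_add_of_ne_zero [Finite F] [DecidableEq F] [CharP F 2] {m : ℕ}
    (hF : Nat.card F = 2 ^ m) (u : F) {v : F} (hv : absTr m v ≠ 0) :
    chi (absTr m (u + v)) = -chi (absTr m u) := by
  let _ := ZMod.algebra F 2
  have sign_add : ∀ s t : ZMod 2, t ≠ 0 →
      (if s + t = 0 then 1 else -1 : ℤ) = -(if s = 0 then 1 else -1) := by decide
  have chi_absTr (x : F) :
      chi (absTr m x) = if Algebra.trace (ZMod 2) F x = 0 then 1 else -1 := by
    simp only [absTr_eq_algebraMap_trace hF, chi, map_eq_zero]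
  rw [absTr_eq_algebraMap_trace hF, map_ne_zero] at hv
  rw [chi_absTr, chi_absTr, map_add, sign_add _ _ hv]

theorem S2k_two_pow_add [CharP F 2] (e k : ℕ) (x y : F) :
    S2k (2 ^ e) k (x + y) = S2k (2 ^ e) k x + S2k (2 ^ e) k y := by
  simp only [S2k, ← pow_mul, add_pow_char_pow, sum_add_distrib]

theorem S2k_eq_zero_of_pow_eq_self [CharP F 2] {q k : ℕ} {y : F} (hy : y ^ q ^ k = y) :
    S2k q k y = 0 := by
  have pow_shift (i : ℕ) : y ^ q ^ (k + i) = y ^ q ^ i := by rw [pow_add, pow_mul, hy]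
  simp only [S2k, two_mul, sum_range_add, pow_shift, CharTwo.add_self_eq_zero]

end FiniteField

theorem stmt_15_general {F : Type*} [Field F] [Fintype F] [DecidableEq F] {q k n m : ℕ}
    (hm : Fintype.card F = 2 ^ m) (hF : Fintype.card F = q ^ (n * k)) (h : F → F) {a : F}
    (ha : ∑ i ∈ range n, a ^ q ^ (i * k) ≠ 0) :
    (∃ y : F, y ^ q ^ k = y ∧ absTr m (a * y) ≠ 0 ∧
      ∀ x : F, absTr m (a * (x + y + h (S2k q k (x + y)))) - absTr m (a * (x + h (S2k q k x)))
        = absTr m (a * y)) ∧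
    ∑ x : F, chi (absTr m (a * (x + h (S2k q k x)))) = 0 := by
  have : CharP F 2 := charP_of_card_eq_prime_pow hm
  let _ := ZMod.algebra F 2
  rw [← Nat.card_eq_fintype_card] at hm hF
  obtain ⟨e, rfl⟩ : ∃ e, q = 2 ^ e := exists_eq_prime_pow_of_card_eq_pow hF
  simp only [mul_comm _ k, pow_mul _ k] at hF ha
  obtain ⟨y, hy, trace_ne_zero⟩ := exists_pow_eq_self_and_trace_mul_ne_zero (p := 2) hF ha
  have absTr_ne_zero : absTr m (a * y) ≠ 0 := by
    rwa [absTr_eq_algebraMap_trace hm, map_ne_zero]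
  have translate (x : F) : a * (x + y + h (S2k (2 ^ e) k (x + y))) =
      a * (x + h (S2k (2 ^ e) k x)) + a * y := by
    rw [S2k_two_pow_add, S2k_eq_zero_of_pow_eq_self hy, add_zero]
    ring
  refine ⟨⟨y, hy, absTr_ne_zero, fun x ↦ ?_⟩, sum_eq_zero_of_map_add_right_eq_neg y fun x ↦ ?_⟩
  · rw [translate, absTr_add, add_sub_cancel_left]
  · rw [translate, chi_absTr_add_of_ne_zero hm _ absTr_ne_zero]

/-- For `q = 4`, `k ≥ 1` and `g(x) = x + S_{2k}(x)^{q^{2k}} + S_{2k}(x)^{q^k+3}`: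
if `a ∈ F_{q^{3k}}` has nonzero relative trace to `F_{q^k}`, then there exists
`y ∈ F_{q^k}` with `Tr(a·g(x+y)) − Tr(a·g(x)) = Tr(a·y) ≠ 0` for all `x`;
consequently `Σ_{x ∈ F_{q^{3k}}} (−1)^{Tr(a·g(x))} = 0`, where `Tr = Tr_{q^{3k}/2}`. -/
theorem stmt_15 (k : ℕ) (hk : 0 < k)
    (F : Type*) [Field F] [Fintype F] [DecidableEq F]
    (hF : Fintype.card F = 4 ^ (3 * k))
    (a : F) (ha : a + a ^ 4 ^ k + a ^ 4 ^ (2 * k) ≠ 0) :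
    (∃ y : F, y ^ 4 ^ k = y ∧ absTr (6 * k) (a * y) ≠ 0 ∧
      ∀ x : F,
        absTr (6 * k) (a * ((x + y) + (S2k 4 k (x + y)) ^ 4 ^ (2 * k)
            + (S2k 4 k (x + y)) ^ (4 ^ k + 3)))
          - absTr (6 * k) (a * (x + (S2k 4 k x) ^ 4 ^ (2 * k)
            + (S2k 4 k x) ^ (4 ^ k + 3)))
        = absTr (6 * k) (a * y)) ∧
    ∑ x : F, chi (absTr (6 * k)
        (a * (x + (S2k 4 k x) ^ 4 ^ (2 * k) + (S2k 4 k x) ^ (4 ^ k + 3)))) = 0 := by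
  have card_eq : Fintype.card F = 2 ^ (6 * k) := by rw [hF, pow_mul, pow_mul]; norm_num
  simpa only [add_assoc] using stmt_15_general card_eq hF
    (fun s ↦ s ^ 4 ^ (2 * k) + s ^ (4 ^ k + 3)) (by simpa [sum_range_succ] using ha)
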